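/- The number of self-complementary plane partitions inside a (2a) × (2b) × (2c) box equals the number of ordered pairs of plane partitions each fitting inside an a × b × c box. Equivalently, the number of order ideals I of [2a]×[2b]×[2c] satisfying I = complement of the 180°-rotation of I equals |J([a]×[b]×[c])|². -/

import Mathlib

namespace StanleySelfComplementary

open Equiv Finset

/-- The signed sum over permutations attached to a matrix `X` indexed by `ι ⊕ ι`; for alternating
`X` it is `2 ^ |ι| * |ι|!` times the Pfaffian of `X`. -/
def pairSum {ι : Type*} [Fintype ι] [DecidableEq ι] (X : Matrix (ι ⊕ ι) (ι ⊕ ι) ℚ) : ℚ :=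
  ∑ σ : Perm (ι ⊕ ι), ((Perm.sign σ : ℤ) : ℚ) * ∏ r, X (σ (.inl r)) (σ (.inr r))

/-- The square matrix whose rows are the vectors `A r` followed by the vectors `C r`. -/
def stackRows {ι n : Type*} (A C : ι → n → ℚ) : Matrix (ι ⊕ ι) n ℚ :=
  Matrix.of (Sum.elim A C)

theorem pairSum_eq_sum_det {ι κ : Type*} [Fintype ι] [DecidableEq ι] [Fintype κ]
    (A C : κ → ι ⊕ ι → ℚ) :
    pairSum (Matrix.of fun i j => ∑ k, A k i * C k j) =
      ∑ k : ι → κ, (stackRows (A ∘ k) (C ∘ k)).det := by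
  classical
  simp only [pairSum, ← Matrix.det_transpose (stackRows _ _), Matrix.det_apply', Matrix.of_apply,
    Finset.prod_univ_sum, Finset.mul_sum, Fintype.piFinset_univ]
  rw [Finset.sum_comm]
  refine Finset.sum_congr rfl fun k _ => Finset.sum_congr rfl fun σ _ => ?_
  simp [Fintype.prod_sum_type, stackRows, Finset.prod_mul_distrib]

theorem sum_sign_mul_prod_eq_zero {ι : Type*} [Fintype ι] [DecidableEq ι]
    (X : ι → Matrix (ι ⊕ ι) (ι ⊕ ι) ℚ) (r₀ : ι) (h : (X r₀).IsSymm) :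
    ∑ σ : Perm (ι ⊕ ι), ((Perm.sign σ : ℤ) : ℚ) * ∏ r, X r (σ (.inl r)) (σ (.inr r)) = 0 := by
  set S := ∑ σ : Perm (ι ⊕ ι), ((Perm.sign σ : ℤ) : ℚ) * ∏ r, X r (σ (.inl r)) (σ (.inr r)) with hS
  have key : S = -S := by
    conv_lhs => rw [hS, ← Equiv.sum_comp (Equiv.mulRight (swap (Sum.inl r₀) (Sum.inr r₀)))]
    rw [hS, ← Finset.sum_neg_distrib]
    refine Finset.sum_congr rfl fun σ _ => ?_
    have hprod : ∏ r, X r ((σ * swap (Sum.inl r₀) (Sum.inr r₀)) (.inl r))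
        ((σ * swap (Sum.inl r₀) (Sum.inr r₀)) (.inr r)) =
        ∏ r, X r (σ (.inl r)) (σ (.inr r)) := by
      refine Finset.prod_congr rfl fun r _ => ?_
      by_cases hr : r = r₀
      · subst hr
        simpa using h.apply _ _
      · rw [Perm.mul_apply, Perm.mul_apply, swap_apply_of_ne_of_ne, swap_apply_of_ne_of_ne] <;>
          simp [hr]
    rw [Equiv.coe_mulRight, hprod, Perm.sign_mul, Perm.sign_swap (by simp)]
    simp
  linarith

theorem pairSum_congr {ι : Type*} [Fintype ι] [DecidableEq ι]
    {X Y : Matrix (ι ⊕ ι) (ι ⊕ ι) ℚ} (h : X - X.transpose = Y - Y.transpose) :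
    pairSum X = pairSum Y := by
  obtain ⟨Z, rfl⟩ : ∃ Z, X = Y + Z := ⟨X - Y, by abel⟩
  have hZ : Z.IsSymm := by
    rw [Matrix.transpose_add] at h
    exact (sub_eq_zero.mp (by rw [← sub_eq_zero.mpr h]; abel)).symm
  simp only [pairSum, Matrix.add_apply, Finset.prod_add, Finset.mul_sum]
  rw [Finset.sum_comm, Finset.sum_eq_single_of_mem univ (by simp)]
  · simp
  · intro s _ hs
    obtain ⟨r₀, hr₀⟩ : ∃ r, r ∉ s := by
      by_contra! hall
      exact hs (Finset.eq_univ_iff_forall.mpr hall)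
    rw [← sum_sign_mul_prod_eq_zero (fun r => if r ∈ s then Y else Z) r₀ (by simpa [hr₀] using hZ)]
    refine Finset.sum_congr rfl fun σ _ => ?_
    congr 1
    rw [← Finset.prod_sdiff (Finset.subset_univ s), mul_comm]
    congr 1
    · exact Finset.prod_congr rfl fun r hr => by simp [(Finset.mem_sdiff.mp hr).2]
    · exact Finset.prod_congr rfl fun r hr => by simp [hr]

theorem det_stackRows_comp_perm {ι : Type*} [Fintype ι] [DecidableEq ι]
    (A C : ι → ι ⊕ ι → ℚ) (σ : Perm ι) :
    (stackRows (A ∘ σ) (C ∘ σ)).det = (stackRows A C).det := by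
  have h : stackRows (A ∘ σ) (C ∘ σ) = (stackRows A C).submatrix (Perm.sumCongr σ σ) id := by
    ext (i | i) j <;> simp [stackRows]
  rw [h, Matrix.det_permute, Perm.sign_sumCongr]
  simp

theorem sum_det_stackRows {a : ℕ} {κ : Type*} [Fintype κ] [LinearOrder κ]
    (A C : κ → Fin a ⊕ Fin a → ℚ) :
    ∑ k : Fin a → κ, (stackRows (A ∘ k) (C ∘ k)).det =
      (a.factorial : ℚ) * ∑ k : Fin a ↪o κ, (stackRows (A ∘ k) (C ∘ k)).det := by
  have h : ∑ x : (Fin a ↪o κ) × Perm (Fin a), (stackRows (A ∘ x.1) (C ∘ x.1)).det =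
      ∑ k : Fin a → κ, (stackRows (A ∘ k) (C ∘ k)).det := by
    refine Finset.sum_of_injOn (fun x => x.1 ∘ x.2) ?_ (by simp) ?_ ?_
    · rintro ⟨k, σ⟩ - ⟨k', σ'⟩ - (hk : k ∘ σ = k' ∘ σ')
      have hr : Set.range k = Set.range k' := by
        rw [← σ.surjective.range_comp k, ← σ'.surjective.range_comp k', hk]
      obtain rfl : k = k' :=
        DFunLike.coe_injective ((k.strictMono.range_inj k'.strictMono).mp hr)
      have : σ = σ' := Equiv.ext fun i => k.injective (congrFun hk i)
      rw [this]
    · intro f _ hf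
      by_cases hinj : Function.Injective f
      · refine absurd ⟨(OrderEmbedding.ofStrictMono (f ∘ Tuple.sort f)
          ((Tuple.monotone_sort f).strictMono_of_injective
            (hinj.comp (Tuple.sort f).injective)), (Tuple.sort f)⁻¹), by simp, ?_⟩ hf
        funext i
        simp
      · simp only [Function.Injective, not_forall] at hinj
        obtain ⟨i, j, hij, hne⟩ := hinj
        refine Matrix.det_zero_of_row_eq (i := .inl i) (j := .inl j) (by simpa using hne) ?_
        funext t
        simp [stackRows, hij]
    · rintro ⟨k, σ⟩ -
      exact (det_stackRows_comp_perm (A ∘ k) (C ∘ k) σ).symm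
  rw [← h, Fintype.sum_prod_type]
  simp [Fintype.card_perm, Finset.mul_sum]

/-- The partial convolution `∑ g u * g (s - u)` over `i ≤ u < i + m`. -/
def partialConv (g : ℤ → ℚ) (m : ℕ) (i s : ℤ) : ℚ :=
  ∑ t ∈ range m, g (i + t) * g (s - i - t)

theorem partialConv_eq_add {g : ℤ → ℚ} {m : ℕ} (hg : ∀ u : ℤ, m ≤ u → g u = 0) {i : ℤ}
    (hi : 0 ≤ i) (s : ℤ) :
    partialConv g m i s = g i * g (s - i) + partialConv g m (i + 1) s := by
  have h : ∑ t ∈ range (m + 1), g (i + t) * g (s - i - t) = partialConv g m i s := by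
    rw [Finset.sum_range_succ, hg (i + m) (by omega), zero_mul, add_zero, partialConv]
  rw [← h, Finset.sum_range_succ', add_comm, partialConv]
  congr 1
  · simp
  · refine Finset.sum_congr rfl fun t _ => ?_
    push_cast
    congr 2 <;> ring

theorem partialConv_sub_add {g : ℤ → ℚ} {m : ℕ} (hg : ∀ u : ℤ, m ≤ u → g u = 0) {i : ℤ}
    (hi : 0 ≤ i) (s : ℤ) (l : ℕ) :
    partialConv g m i s - partialConv g m (i + l) s = ∑ t ∈ range l, g (i + t) * g (s - i - t) := by
  induction l with
  | zero => simp
  | succ l ih =>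
    rw [Finset.sum_range_succ, ← ih, partialConv_eq_add hg (i := i + l) (by omega)]
    push_cast
    rw [show s - (i + l) = s - i - l by ring, show i + ((l : ℤ) + 1) = i + l + 1 by ring]
    ring

/-- The alternating form `(x ^ i, x ^ j) ↦ (L ⊗ L) ((x ^ j * y ^ i - x ^ i * y ^ j) / (x - y))`,
where `L` is the functional `x ^ u ↦ g u`. -/
def bezoutForm (g : ℤ → ℚ) (m : ℕ) (i j : ℤ) : ℚ :=
  partialConv g m i (i + j - 1) - partialConv g m j (i + j - 1)

theorem bezoutForm_swap (g : ℤ → ℚ) (m : ℕ) (i j : ℤ) :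
    bezoutForm g m i j = -bezoutForm g m j i := by
  simp only [bezoutForm, add_comm i j]
  ring

theorem bezoutForm_succ_left {g : ℤ → ℚ} {m : ℕ} (hg : ∀ u : ℤ, m ≤ u → g u = 0) {i j : ℤ}
    (hi : 0 ≤ i) (hj : 0 ≤ j) :
    bezoutForm g m (i + 1) j = bezoutForm g m i (j + 1) - 2 * g i * g j := by
  have h₁ := partialConv_eq_add hg hi (i + j)
  have h₂ := partialConv_eq_add hg hj (i + j)
  rw [show i + j - i = j by ring] at h₁
  rw [show i + j - j = i by ring] at h₂
  simp only [bezoutForm, show i + 1 + j - 1 = i + j by ring, show i + (j + 1) - 1 = i + j by ring]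
  linarith

/-- `bezoutForm` at `x ^ i` and `p * x ^ j`, where `p` has degree at most `a`. -/
def bezoutFormRight (g : ℤ → ℚ) (m a : ℕ) (p : ℕ → ℚ) (i j : ℤ) : ℚ :=
  ∑ k ∈ range (a + 1), p k * bezoutForm g m i (j + k)

/-- `bezoutForm` at `p * x ^ i` and `p * x ^ j`, where `p` has degree at most `a`. -/
def bezoutFormBoth (g : ℤ → ℚ) (m a : ℕ) (p : ℕ → ℚ) (i j : ℤ) : ℚ :=
  ∑ l ∈ range (a + 1), p l * bezoutFormRight g m a p (i + l) j

section Orthogonal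

variable {g : ℤ → ℚ} {m a : ℕ} {p : ℕ → ℚ}

theorem bezoutFormRight_succ_left (hg : ∀ u : ℤ, m ≤ u → g u = 0)
    (hp : ∀ j : ℤ, 0 ≤ j → j < a → ∑ k ∈ range (a + 1), p k * g (k + j) = 0) {i j : ℤ}
    (hi : 0 ≤ i) (hj : 0 ≤ j) (hja : j < a) :
    bezoutFormRight g m a p (i + 1) j = bezoutFormRight g m a p i (j + 1) := by
  rw [← sub_eq_zero, bezoutFormRight, bezoutFormRight, ← Finset.sum_sub_distrib]
  calc _ = ∑ k ∈ range (a + 1), (-2 * g i) * (p k * g (k + j)) := by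
        refine Finset.sum_congr rfl fun k _ => ?_
        rw [bezoutForm_succ_left hg hi (by omega), show j + 1 + (k : ℤ) = j + k + 1 by ring,
          add_comm (k : ℤ) j]
        ring
    _ = 0 := by rw [← Finset.mul_sum, hp j hj hja, mul_zero]

theorem bezoutFormBoth_swap (i j : ℤ) :
    bezoutFormBoth g m a p i j = -bezoutFormBoth g m a p j i := by
  simp only [bezoutFormBoth, bezoutFormRight, Finset.mul_sum, ← Finset.sum_neg_distrib]
  rw [Finset.sum_comm]
  refine Finset.sum_congr rfl fun k _ => Finset.sum_congr rfl fun l _ => ?_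
  rw [bezoutForm_swap]
  ring

theorem bezoutFormBoth_add_left (hg : ∀ u : ℤ, m ≤ u → g u = 0)
    (hp : ∀ j : ℤ, 0 ≤ j → j < a → ∑ k ∈ range (a + 1), p k * g (k + j) = 0) {i j : ℤ}
    (hi : 0 ≤ i) (hj : 0 ≤ j) (d : ℕ) (hd : j + d ≤ a) :
    bezoutFormBoth g m a p (i + d) j = bezoutFormBoth g m a p i (j + d) := by
  induction d generalizing j with
  | zero => simp
  | succ d ih =>
    push_cast at hd ⊢
    rw [show j + ((d : ℤ) + 1) = j + 1 + d by ring, ← ih (by omega) (by omega)]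
    refine Finset.sum_congr rfl fun l _ => ?_
    rw [← bezoutFormRight_succ_left hg hp (by omega) hj (by omega)]
    congr 2
    ring

theorem bezoutFormBoth_eq_zero (hg : ∀ u : ℤ, m ≤ u → g u = 0)
    (hp : ∀ j : ℤ, 0 ≤ j → j < a → ∑ k ∈ range (a + 1), p k * g (k + j) = 0) {i j : ℤ}
    (hi : 0 ≤ i) (hj : 0 ≤ j) (hia : i ≤ a) (hja : j ≤ a) :
    bezoutFormBoth g m a p i j = 0 := by
  wlog hij : i ≤ j generalizing i j
  · rw [bezoutFormBoth_swap, this hj hi hja hia (by omega), neg_zero]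
  obtain ⟨d, rfl⟩ := Int.le.dest hij
  have h₁ := bezoutFormBoth_add_left hg hp hi hi d hja
  have h₂ := bezoutFormBoth_swap (g := g) (m := m) (a := a) (p := p) i (i + d)
  linarith

theorem sum_mul_partialConv_add (hg : ∀ u : ℤ, m ≤ u → g u = 0)
    (hp : ∀ j : ℤ, 0 ≤ j → j < a → ∑ k ∈ range (a + 1), p k * g (k + j) = 0) (s : ℤ) (i : ℕ)
    (hi : i ≤ a) :
    ∑ l ∈ range (a + 1), p l * partialConv g m (i + l) (s + l) =
      ∑ l ∈ range (a + 1), p l * partialConv g m l (s + l) := by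
  induction i with
  | zero => simp
  | succ i ih =>
    rw [← ih (by omega), ← sub_eq_zero, ← Finset.sum_sub_distrib]
    calc _ = ∑ l ∈ range (a + 1), (-g (s - i)) * (p l * g (l + i)) := by
          refine Finset.sum_congr rfl fun l _ => ?_
          rw [partialConv_eq_add hg (i := (i : ℤ) + l) (by omega)]
          push_cast
          rw [show s + (l : ℤ) - (i + l) = s - i by ring, add_comm (l : ℤ) i,
            show (i : ℤ) + 1 + l = i + l + 1 by ring]
          ring
      _ = 0 := by rw [← Finset.mul_sum, hp i (by omega) (by omega), mul_zero]

theorem bezoutFormRight_eq (hg : ∀ u : ℤ, m ≤ u → g u = 0)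
    (hp : ∀ j : ℤ, 0 ≤ j → j < a → ∑ k ∈ range (a + 1), p k * g (k + j) = 0) (i j : ℕ)
    (hi : i ≤ a) (hj : j ≤ a) :
    bezoutFormRight g m a p i j =
      ∑ l ∈ range (a + 1), p l * ∑ t ∈ range l, g (i + t) * g (j + l - 1 - t) := by
  have h₁ := sum_mul_partialConv_add hg hp (i + j - 1) i hi
  have h₂ := sum_mul_partialConv_add hg hp (i + j - 1) j hj
  have h₃ : ∀ l : ℕ, ∑ t ∈ range l, g (i + t) * g (j + l - 1 - t) =
      partialConv g m i (i + j - 1 + l) - partialConv g m (i + l) (i + j - 1 + l) := by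
    intro l
    rw [partialConv_sub_add hg (by omega)]
    refine Finset.sum_congr rfl fun t _ => ?_
    congr 2
    ring
  simp only [h₃, mul_sub, Finset.sum_sub_distrib, bezoutFormRight, bezoutForm]
  rw [h₁, ← h₂]
  simp only [show ∀ l : ℤ, (i : ℤ) + (j + l) - 1 = i + j - 1 + l by intro l; ring]

theorem sum_mul_sum_range_eq (hpa : ∀ k, a < k → p k = 0) (F : ℕ → ℕ → ℚ) :
    ∑ l ∈ range (a + 1), p l * ∑ t ∈ range l, F t (l - 1 - t) =
      ∑ u : Fin a, ∑ v : Fin a, p (u + v + 1) * F u v := by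
  have h (u : ℕ) := Fin.sum_univ_eq_sum_range (fun v => p (u + v + 1) * F u v) a
  rw [Fin.sum_univ_eq_sum_range (fun u => ∑ v : Fin a, p (u + v + 1) * F u v)]
  simp only [h, Finset.mul_sum]
  rw [Finset.sum_sigma', ← Finset.sum_product']
  refine Finset.sum_of_injOn (fun x => (x.2, x.1 - 1 - x.2)) ?_ ?_ ?_ ?_
  · rintro ⟨l, t⟩ h ⟨l', t'⟩ h' heq
    simp only [coe_sigma, Set.mem_sigma_iff, mem_coe, mem_range, Prod.mk.injEq] at h h' heq
    obtain ⟨rfl, h₂⟩ := heq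
    obtain rfl : l = l' := by omega
    rfl
  · rintro ⟨l, t⟩ h
    simp only [coe_sigma, Set.mem_sigma_iff, mem_coe, mem_range, mem_product] at h ⊢
    omega
  · rintro ⟨u, v⟩ h hn
    rw [hpa, zero_mul]
    by_contra! hle
    refine hn ⟨⟨u + v + 1, u⟩, ?_, ?_⟩
    · simp only [coe_sigma, Set.mem_sigma_iff, mem_coe, mem_range]
      omega
    · simp only [Prod.mk.injEq, true_and]
      omega
  · rintro ⟨l, t⟩ h
    simp only [mem_sigma, mem_range] at h
    simp only
    congr 2
    omega

end Orthogonal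

theorem exists_orthogonal_monic {g : ℤ → ℚ} {a : ℕ}
    (hH : (Matrix.of fun i j : Fin a => g (i + j)).det ≠ 0) :
    ∃ p : ℕ → ℚ, p a = 1 ∧ (∀ k, a < k → p k = 0) ∧
      ∀ j : ℤ, 0 ≤ j → j < a → ∑ k ∈ range (a + 1), p k * g (k + j) = 0 := by
  obtain ⟨q, hq⟩ := (Matrix.mulVec_surjective_iff_isUnit.mpr
    ((Matrix.isUnit_iff_isUnit_det _).mpr (isUnit_iff_ne_zero.mpr hH))) fun j => -g (a + j)
  refine ⟨fun k => if h : k < a then q ⟨k, h⟩ else if k = a then 1 else 0, by simp,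
    fun k hk => by simp [hk.not_gt, hk.ne'], fun j hj hja => ?_⟩
  lift j to ℕ using hj
  have hj' : j < a := by omega
  have h := congrFun hq ⟨j, hj'⟩
  rw [Finset.sum_range_succ, Finset.sum_range]
  simp only [Matrix.mulVec, dotProduct, Matrix.of_apply] at h
  simp only [Fin.is_lt, dite_true, lt_irrefl, dite_false, if_true, one_mul]
  rw [add_eq_zero_iff_eq_neg, ← h]
  exact Finset.sum_congr rfl fun k _ => by rw [mul_comm, add_comm]

/-- The position of an index in the concatenation of two blocks of length `a`. -/
def blockPos {a : ℕ} (α : Fin a ⊕ Fin a) : ℕ :=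
  Sum.elim Fin.val (fun i : Fin a => a + (i : ℕ)) α

@[simp]
theorem blockPos_inl {a : ℕ} (i : Fin a) : blockPos (.inl i) = i := rfl

@[simp]
theorem blockPos_inr {a : ℕ} (i : Fin a) : blockPos (.inr i) = a + i := rfl

theorem sum_blockPos {a : ℕ} (F : ℕ → ℚ) :
    ∑ α : Fin a ⊕ Fin a, F (blockPos α) = ∑ n ∈ range (a + a), F n := by
  rw [Fintype.sum_sum_type, Finset.sum_range_add, Finset.sum_range, Finset.sum_range]
  rfl

/-- The change of basis from the powers of `x` to the `x ^ i` and `p * x ^ i`, `i < a`. -/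
def basisChange (a : ℕ) (p : ℕ → ℚ) : Matrix (Fin a ⊕ Fin a) (Fin a ⊕ Fin a) ℚ :=
  Matrix.of (Sum.elim (fun i α => if α = .inl i then 1 else 0)
    (fun i α => if (i : ℕ) ≤ blockPos α then p (blockPos α - i) else 0))

theorem det_basisChange {a : ℕ} {p : ℕ → ℚ} (hpa : p a = 1) (hp : ∀ k, a < k → p k = 0) :
    (basisChange a p).det = 1 := by
  rw [← Matrix.fromBlocks_toBlocks (basisChange a p)]
  have h₁₁ : (basisChange a p).toBlocks₁₁ = 1 := by
    ext i j
    simp [basisChange, Matrix.toBlocks₁₁, Matrix.one_apply, eq_comm]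
  have h₁₂ : (basisChange a p).toBlocks₁₂ = 0 := by
    ext i j
    simp [basisChange, Matrix.toBlocks₁₂]
  rw [h₁₁, h₁₂, Matrix.det_fromBlocks_zero₁₂, Matrix.det_one, one_mul,
    Matrix.det_of_isLowerTriangular]
  · refine Finset.prod_eq_one fun i _ => ?_
    simp [basisChange, Matrix.toBlocks₂₂, hpa]
  · intro i j hij
    have hij : (i : ℕ) < j := hij
    have hle : (i : ℕ) ≤ blockPos (.inr j : Fin a ⊕ Fin a) := by rw [blockPos_inr]; omega
    simp only [basisChange, Matrix.toBlocks₂₂, Matrix.of_apply, Sum.elim_inr, if_pos hle]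
    exact hp _ (by rw [blockPos_inr]; omega)

theorem sum_basisChange_inl {a : ℕ} (p : ℕ → ℚ) (i : Fin a) (F : ℕ → ℚ) :
    ∑ α, basisChange a p (.inl i) α * F (blockPos α) = F i := by
  simp [basisChange]

theorem sum_basisChange_inr {a : ℕ} {p : ℕ → ℚ} (hp : ∀ k, a < k → p k = 0) (i : Fin a)
    (F : ℕ → ℚ) :
    ∑ α, basisChange a p (.inr i) α * F (blockPos α) = ∑ k ∈ range (a + 1), p k * F (i + k) := by
  simp only [basisChange, Matrix.of_apply, Sum.elim_inr]
  rw [sum_blockPos fun n => (if (i : ℕ) ≤ n then p (n - i) else 0) * F n]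
  symm
  refine Finset.sum_of_injOn (fun k => (i : ℕ) + k) (fun x _ y _ h => by simpa using h) ?_ ?_ ?_
  · intro k hk
    simp only [coe_range, Set.mem_Iio] at hk ⊢
    omega
  · intro n _ hn
    split_ifs with hin
    · rw [hp, zero_mul]
      by_contra! hle
      exact hn ⟨n - i, by simpa using by omega, by simpa using by omega⟩
    · rw [zero_mul]
  · intro k _
    simp

theorem abs_det_antitriangular {a : ℕ} {p : ℕ → ℚ} (hpa : p a = 1) (hp : ∀ k, a < k → p k = 0) :
    |(Matrix.of fun u v : Fin a => p (u + v + 1)).det| = 1 := by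
  rw [← Matrix.abs_det_submatrix_equiv_equiv (Equiv.refl _) Fin.revPerm,
    Matrix.det_of_isUpperTriangular]
  · rw [Finset.prod_eq_one, abs_one]
    intro i _
    simp only [Matrix.submatrix_apply, Equiv.refl_apply, Fin.revPerm_apply, Matrix.of_apply,
      Fin.val_rev]
    rw [← hpa]
    congr 1
    omega
  · intro i j hij
    have hij : (j : ℕ) < i := hij
    simp only [Matrix.submatrix_apply, Equiv.refl_apply, Fin.revPerm_apply, Matrix.of_apply,
      Fin.val_rev]
    exact hp _ (by omega)

theorem of_mulVec_eq_mul_transpose {κ n : Type*} [Fintype n] (K : Matrix n n ℚ) (D : κ → n → ℚ) :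
    Matrix.of (fun k => K.mulVec (D k)) = Matrix.of D * K.transpose := by
  ext k β
  simp only [Matrix.mul_apply, Matrix.transpose_apply, Matrix.of_apply, Matrix.mulVec, dotProduct]
  exact Finset.sum_congr rfl fun _ _ => mul_comm _ _

theorem stackRows_mulVec {ι n : Type*} [Fintype n] (K : Matrix n n ℚ) (A C : ι → n → ℚ) :
    stackRows (fun r => K.mulVec (A r)) (fun r => K.mulVec (C r)) =
      stackRows A C * K.transpose := by
  rw [stackRows, stackRows, ← of_mulVec_eq_mul_transpose]
  ext (i | i) β <;> rfl

theorem sum_mulVec_mul_mulVec {κ n : Type*} [Fintype κ] [Fintype n] (K : Matrix n n ℚ)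
    (A C : κ → n → ℚ) :
    (Matrix.of fun i j => ∑ k, K.mulVec (A k) i * K.mulVec (C k) j) =
      K * (Matrix.of fun i j => ∑ k, A k i * C k j) * K.transpose := by
  have h₁ : (Matrix.of fun i j => ∑ k, A k i * C k j) = (Matrix.of A).transpose * Matrix.of C := rfl
  have h₂ : (Matrix.of fun i j => ∑ k, K.mulVec (A k) i * K.mulVec (C k) j) =
    (Matrix.of fun k => K.mulVec (A k)).transpose * Matrix.of (fun k => K.mulVec (C k)) := rfl
  rw [h₁, h₂, of_mulVec_eq_mul_transpose, of_mulVec_eq_mul_transpose, Matrix.transpose_mul,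
    Matrix.transpose_transpose]
  simp only [Matrix.mul_assoc]

theorem mul_mul_transpose_apply {n : Type*} [Fintype n] (K Q : Matrix n n ℚ) (α β : n) :
    (K * Q * K.transpose) α β = ∑ γ, K α γ * ∑ δ, K β δ * Q γ δ := by
  rw [Matrix.mul_assoc, Matrix.mul_apply]
  refine Finset.sum_congr rfl fun γ _ => ?_
  rw [Matrix.mul_apply]
  simp only [Matrix.transpose_apply, mul_comm]

theorem sum_fin_eq_partialConv (h : ℤ → ℚ) (m : ℕ) (i j : ℤ) :
    ∑ k : Fin m, h (k - i) * h (2 * m - 1 - k - j) =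
      partialConv (fun u => h (m - 1 - u)) m i (i + j - 1) := by
  rw [Fin.sum_univ_eq_sum_range fun k : ℕ => h (k - i) * h (2 * m - 1 - k - j),
    ← Finset.sum_range_reflect, partialConv]
  refine Finset.sum_congr rfl fun t ht => ?_
  have := Finset.mem_range.mp ht
  congr 2 <;> omega

/-- The signed sum of the minors of a Toeplitz matrix on centrally symmetric sets of rows is the
square of a Hankel determinant. -/
theorem abs_sum_det_symmetric {h : ℤ → ℚ} (hneg : ∀ k < 0, h k = 0) (a m : ℕ)
    (hH : (Matrix.of fun i j : Fin a => h (m - 1 - (i + j))).det ≠ 0) :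
    |∑ k : Fin a ↪o Fin m, (stackRows (fun r (α : Fin a ⊕ Fin a) => h (k r - blockPos α))
        (fun r α => h (2 * m - 1 - k r - blockPos α))).det| =
      (Matrix.of fun i j : Fin a => h (m - 1 - (i + j))).det ^ 2 := by
  set g : ℤ → ℚ := fun u => h (m - 1 - u) with hgdef
  have hg : ∀ u : ℤ, m ≤ u → g u = 0 := fun u hu => hneg _ (by omega)
  set H : Matrix (Fin a) (Fin a) ℚ := Matrix.of fun i j : Fin a => h (m - 1 - (i + j))
  obtain ⟨p, hpa, hpk, hp⟩ := exists_orthogonal_monic (g := g) (a := a) hH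
  let A : Fin m → Fin a ⊕ Fin a → ℚ := fun k α => h (k - blockPos α)
  let C : Fin m → Fin a ⊕ Fin a → ℚ := fun k α => h (2 * m - 1 - k - blockPos α)
  let K := basisChange a p
  let A' : Fin m → Fin a ⊕ Fin a → ℚ := fun k => K.mulVec (A k)
  let C' : Fin m → Fin a ⊕ Fin a → ℚ := fun k => K.mulVec (C k)
  have hdet : ∀ k : Fin a → Fin m,
      (stackRows (A' ∘ k) (C' ∘ k)).det = (stackRows (A ∘ k) (C ∘ k)).det := by
    intro k
    have : stackRows (A' ∘ k) (C' ∘ k) = stackRows (A ∘ k) (C ∘ k) * K.transpose :=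
      stackRows_mulVec K (A ∘ k) (C ∘ k)
    rw [this, Matrix.det_mul, Matrix.det_transpose, det_basisChange hpa hpk, mul_one]
  let X : Matrix (Fin a ⊕ Fin a) (Fin a ⊕ Fin a) ℚ := Matrix.of fun i j => ∑ k, A k i * C k j
  let X' : Matrix (Fin a ⊕ Fin a) (Fin a ⊕ Fin a) ℚ := Matrix.of fun i j => ∑ k, A' k i * C' k j
  let Q : Matrix (Fin a ⊕ Fin a) (Fin a ⊕ Fin a) ℚ :=
    Matrix.of fun α β => bezoutForm g m (blockPos α) (blockPos β)
  have hX : X - X.transpose = Q := by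
    ext α β
    simp only [X, A, C, Q, Matrix.sub_apply, Matrix.transpose_apply, Matrix.of_apply,
      sum_fin_eq_partialConv, bezoutForm]
    rw [add_comm (blockPos β : ℤ)]
  have hX' : X' = K * X * K.transpose := sum_mulVec_mul_mulVec K A C
  let Q' := K * Q * K.transpose
  have hQ'X : X' - X'.transpose = Q' := by
    rw [hX']
    simp only [Q', ← hX, Matrix.transpose_mul, Matrix.transpose_transpose, Matrix.mul_sub,
      Matrix.sub_mul, Matrix.mul_assoc]
  have hQ'apply : ∀ α β, Q' α β =
      ∑ γ, K α γ * ∑ δ, K β δ * bezoutForm g m (blockPos γ) (blockPos δ) :=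
    mul_mul_transpose_apply K Q
  have hQ'swap : ∀ α β, Q' α β = -Q' β α := by
    intro α β
    rw [← hQ'X]
    simp
  have hQ'₁₂ : ∀ i j : Fin a, Q' (.inl i) (.inr j) = bezoutFormRight g m a p i j := by
    intro i j
    rw [hQ'apply, sum_basisChange_inl p i
      (fun n => ∑ δ, K (.inr j) δ * bezoutForm g m n (blockPos δ)),
      sum_basisChange_inr hpk j (fun n => bezoutForm g m i n)]
    simp [bezoutFormRight]
  have hQ'₂₂ : ∀ i j : Fin a, Q' (.inr i) (.inr j) = 0 := by
    intro i j
    rw [hQ'apply, sum_basisChange_inr hpk i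
      (fun n => ∑ δ, K (.inr j) δ * bezoutForm g m n (blockPos δ))]
    rw [← bezoutFormBoth_eq_zero hg hp (i := i) (j := j) (by omega) (by omega) (by omega)
      (by omega), bezoutFormBoth]
    refine Finset.sum_congr rfl fun l _ => ?_
    rw [sum_basisChange_inr hpk j (fun n => bezoutForm g m ((i + l : ℕ) : ℤ) n)]
    simp [bezoutFormRight]
  let e : Fin a → Fin a ⊕ Fin a → ℚ := fun r α => if α = .inl r then 1 else 0
  let y : Fin a → Fin a ⊕ Fin a → ℚ := fun r =>
    Sum.elim (fun j => Q' (.inl r) (.inl j) / 2) (fun j => Q' (.inl r) (.inr j))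
  let Y : Matrix (Fin a ⊕ Fin a) (Fin a ⊕ Fin a) ℚ := Matrix.of fun i j => ∑ k, e k i * y k j
  have hY : Y - Y.transpose = Q' := by
    ext (i | i) (j | j)
    · have := hQ'swap (.inl i) (.inl j)
      simp only [Y, e, y, Matrix.sub_apply, Matrix.transpose_apply, Matrix.of_apply]
      simp
      linarith
    · simp [Y, e, y]
    · simp [Y, e, y, hQ'swap (.inr i) (.inl j)]
    · simp [Y, e, y, hQ'₂₂]
  have hpair : pairSum X' = pairSum Y := pairSum_congr (hQ'X.trans hY.symm)
  rw [pairSum_eq_sum_det, pairSum_eq_sum_det, sum_det_stackRows, sum_det_stackRows,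
    mul_right_inj' (by positivity)] at hpair
  have hB : (stackRows e y).det = (H * (Matrix.of fun u v : Fin a => p (u + v + 1)) * H).det := by
    have : stackRows e y = Matrix.fromBlocks 1 0 (Matrix.of fun i j => Q' (.inl i) (.inl j) / 2)
        (H * (Matrix.of fun u v : Fin a => p (u + v + 1)) * H) := by
      ext (i | i) (j | j)
      · simp [stackRows, e, Matrix.one_apply, eq_comm]
      · simp [stackRows, e]
      · simp [stackRows, y]
      · simp only [stackRows, y, Matrix.of_apply, Sum.elim_inr, Matrix.fromBlocks_apply₂₂, hQ'₁₂]
        rw [bezoutFormRight_eq hg hp i j (by omega) (by omega)]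
        have hF := sum_mul_sum_range_eq hpk fun u v : ℕ => g (i + u) * g (j + v)
        calc _ = _ := Finset.sum_congr rfl fun l _ => congrArg (p l * ·) <|
              Finset.sum_congr rfl fun t ht => by
                have := Finset.mem_range.mp ht
                congr 2
                omega
          _ = _ := hF
          _ = _ := by
            simp only [Matrix.mul_apply, Finset.sum_mul, H, Matrix.of_apply]
            rw [Finset.sum_comm]
            refine Finset.sum_congr rfl fun v _ => Finset.sum_congr rfl fun u _ => ?_
            simp only [hgdef, add_comm (j : ℤ)]
            ring
    rw [this, Matrix.det_fromBlocks_zero₁₂, Matrix.det_one, one_mul]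
  have huniq : ∑ k : Fin a ↪o Fin a, (stackRows (e ∘ k) (y ∘ k)).det = (stackRows e y).det := by
    rw [Finset.sum_eq_single_of_mem (RelEmbedding.refl _) (by simp)]
    · rfl
    · intro k _ hk
      refine absurd (DFunLike.coe_injective ?_) hk
      refine ((OrderEmbedding.strictMono k).range_inj strictMono_id).mp ?_
      rw [(Finite.injective_iff_surjective.mp k.injective).range_eq, Set.range_id]
  have hfinal : ∑ k : Fin a ↪o Fin m, (stackRows (A ∘ k) (C ∘ k)).det =
      (H * (Matrix.of fun u v : Fin a => p (u + v + 1)) * H).det := by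
    rw [← hB, ← huniq, ← hpair]
    exact Finset.sum_congr rfl fun k _ => (hdet k).symm
  change |∑ k : Fin a ↪o Fin m, (stackRows (A ∘ k) (C ∘ k)).det| = _
  rw [hfinal, Matrix.det_mul, Matrix.det_mul, abs_mul, abs_mul, abs_det_antitriangular hpa hpk,
    mul_one, abs_mul_abs_self, sq]

/-- The complete homogeneous symmetric polynomial of degree `k` evaluated at `n` ones. -/
def completeHom (n : ℕ) (k : ℤ) : ℚ := if k < 0 then 0 else (n.multichoose k.toNat : ℚ)

theorem completeHom_of_neg (n : ℕ) {k : ℤ} (hk : k < 0) : completeHom n k = 0 := if_pos hk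

theorem completeHom_zero (k : ℤ) : completeHom 0 k = if k = 0 then 1 else 0 := by
  rcases lt_trichotomy k 0 with hk | rfl | hk
  · rw [completeHom_of_neg _ hk, if_neg hk.ne]
  · simp [completeHom]
  · obtain ⟨d, rfl⟩ : ∃ d : ℕ, k = d + 1 := ⟨(k - 1).toNat, by omega⟩
    rw [completeHom, if_neg hk.not_gt, if_neg hk.ne', show ((d : ℤ) + 1).toNat = d + 1 by omega,
      Nat.multichoose_zero_succ, Nat.cast_zero]

theorem completeHom_succ (n : ℕ) (k : ℤ) :
    completeHom (n + 1) k = completeHom (n + 1) (k - 1) + completeHom n k := by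
  rcases lt_trichotomy k 0 with hk | rfl | hk
  · simp [completeHom_of_neg _ hk, completeHom_of_neg _ (show k - 1 < 0 by omega)]
  · simp [completeHom]
  · obtain ⟨d, rfl⟩ : ∃ d : ℕ, k = d + 1 := ⟨(k - 1).toNat, by omega⟩
    rw [completeHom, completeHom, completeHom, if_neg hk.not_gt, if_neg hk.not_gt,
      if_neg (by omega), show ((d : ℤ) + 1).toNat = d + 1 by omega,
      show ((d : ℤ) + 1 - 1).toNat = d by omega, Nat.multichoose_succ_succ]
    push_cast
    ring

theorem sum_Ioc_completeHom (n : ℕ) (j : ℤ) {x y : ℤ} (hxy : x ≤ y) :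
    ∑ q ∈ Ioc x y, completeHom n (q - j) =
      completeHom (n + 1) (y - j) - completeHom (n + 1) (x - j) := by
  induction y, hxy using Int.leInduction with
  | base => simp
  | succ y hxy ih =>
    have : Ioc x (y + 1) = insert (y + 1) (Ioc x y) := by
      ext
      simp only [mem_Ioc, mem_insert]
      omega
    rw [this, Finset.sum_insert (by simp), ih, completeHom_succ n (y + 1 - j),
      show y + 1 - j - 1 = y - j by ring]
    ring

section Interlacing

variable {N : ℕ}

/-- The positions `q` precede the positions `l` in one step:
`0 ≤ q 0 ≤ l 0 < q 1 ≤ l 1 < q 2 ≤ ⋯`. -/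
def Interlaces (q l : Fin N → ℤ) : Prop :=
  (∀ i, q i ≤ l i) ∧ (∀ i : Fin N, (i : ℕ) = 0 → 0 ≤ q i) ∧
    ∀ i j : Fin N, (i : ℕ) + 1 = j → l i < q j

/-- The strict lower bound for the `i`-th position one step before `l`. -/
def lowerPos (l : Fin N → ℤ) (i : Fin N) : ℤ := (Fin.cons (-1) l : Fin (N + 1) → ℤ) i.castSucc

/-- The finite set of positions that precede `l` in one step. -/
noncomputable def predecessors (l : Fin N → ℤ) : Finset (Fin N → ℤ) :=
  Fintype.piFinset fun i => Ioc (lowerPos l i) (l i)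

theorem lowerPos_of_eq_zero (l : Fin N → ℤ) {i : Fin N} (hi : (i : ℕ) = 0) :
    lowerPos l i = -1 := by
  cases N with
  | zero => exact i.elim0
  | succ N =>
    obtain rfl : i = 0 := Fin.ext hi
    rfl

theorem lowerPos_of_succ (l : Fin N → ℤ) {i j : Fin N} (hij : (i : ℕ) + 1 = j) :
    lowerPos l j = l i := by
  rw [lowerPos, show j.castSucc = i.succ from Fin.ext hij.symm, Fin.cons_succ]

theorem mem_predecessors {q l : Fin N → ℤ} : q ∈ predecessors l ↔ Interlaces q l := by
  simp only [predecessors, Fintype.mem_piFinset, mem_Ioc]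
  constructor
  · intro h
    refine ⟨fun i => (h i).2, fun i hi => ?_, fun i j hij => ?_⟩
    · have := (h i).1
      rw [lowerPos_of_eq_zero l hi] at this
      omega
    · rw [← lowerPos_of_succ l hij]
      exact (h j).1
  · rintro ⟨h₁, h₂, h₃⟩ j
    refine ⟨?_, h₁ j⟩
    rcases Nat.eq_zero_or_pos (j : ℕ) with hj | hj
    · rw [lowerPos_of_eq_zero l hj]
      have := h₂ j hj
      omega
    · have hij : ((⟨j - 1, by omega⟩ : Fin N) : ℕ) + 1 = j := Nat.sub_add_cancel hj
      rw [lowerPos_of_succ l hij]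
      exact h₃ _ _ hij

theorem strictMono_of_forall_succ {q : Fin N → ℤ}
    (h : ∀ i j : Fin N, (i : ℕ) + 1 = j → q i < q j) : StrictMono q := by
  cases N with
  | zero => exact Subsingleton.strictMono q
  | succ N => exact Fin.strictMono_iff_lt_succ.mpr fun i => h _ _ (by simp)

theorem Interlaces.strictMono {q l : Fin N → ℤ} (h : Interlaces q l) : StrictMono q :=
  strictMono_of_forall_succ fun i j hij => (h.1 i).trans_lt (h.2.2 i j hij)

theorem Interlaces.strictMono_right {q l : Fin N → ℤ} (h : Interlaces q l) : StrictMono l :=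
  strictMono_of_forall_succ fun i j hij => (h.2.2 i j hij).trans_le (h.1 j)

theorem Interlaces.nonneg {q l : Fin N → ℤ} (h : Interlaces q l) (i : Fin N) : 0 ≤ q i :=
  (h.2.1 ⟨0, i.pos⟩ rfl).trans (h.strictMono.monotone (Nat.zero_le i))

/-- The Jacobi–Trudi matrix of the positions `l`, evaluated at `n` ones. -/
def toeplitzMatrix (n : ℕ) (l : Fin N → ℤ) : Matrix (Fin N) (Fin N) ℚ :=
  Matrix.of fun i j => completeHom n (l i - j)

theorem det_toeplitzMatrix_succ (n : ℕ) {l : Fin N → ℤ} (hl : StrictMono l) (h0 : ∀ i, 0 ≤ l i) :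
    (toeplitzMatrix (n + 1) l).det = ∑ q ∈ predecessors l, (toeplitzMatrix n q).det := by
  have hsum : (Matrix.of fun i j : Fin N =>
      ∑ q ∈ Ioc (lowerPos l i) (l i), completeHom n (q - j)).det =
      ∑ q ∈ predecessors l, (toeplitzMatrix n q).det := by
    have := (Matrix.detRowAlternating (R := ℚ) (n := Fin N)).toMultilinearMap.map_sum_finset
      (fun _ (q : ℤ) (j : Fin N) => completeHom n (q - j)) fun i => Ioc (lowerPos l i) (l i)
    refine Eq.trans ?_ this
    change Matrix.det _ = Matrix.det _
    congr 1
    ext i j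
    simp
  rw [← hsum]
  cases N with
  | zero => simp
  | succ N =>
    refine Matrix.det_eq_of_forall_row_eq_smul_add_pred (fun _ => 1) (fun j => ?_) fun i j => ?_
    · rw [Matrix.of_apply, lowerPos_of_eq_zero l rfl,
        sum_Ioc_completeHom _ _ (by have := h0 0; omega),
        completeHom_of_neg (k := -1 - _) _ (by omega), sub_zero]
      rfl
    · rw [Matrix.of_apply, lowerPos_of_succ l (i := i.castSucc) (by simp),
        sum_Ioc_completeHom _ _ (hl (Fin.castSucc_lt_succ (i := i))).le]
      simp [toeplitzMatrix]

theorem det_toeplitzMatrix_zero {l : Fin N → ℤ} (hl : StrictMono l) (h0 : ∀ i, 0 ≤ l i) :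
    (toeplitzMatrix 0 l).det = if l = (fun i : Fin N => (i : ℤ)) then 1 else 0 := by
  split_ifs with h
  · have : toeplitzMatrix 0 l = 1 := by
      ext i j
      simp [toeplitzMatrix, completeHom_zero, h, Matrix.one_apply, sub_eq_zero, Fin.ext_iff]
    rw [this, Matrix.det_one]
  · obtain ⟨i, hi⟩ : ∃ i, (N : ℤ) ≤ l i := by
      by_contra! hlt
      refine h (funext fun i => ?_)
      let f : Fin N → Fin N := fun i => ⟨(l i).toNat, by have := hlt i; have := h0 i; omega⟩
      have hf : StrictMono f := fun i j hij => by
        have := hl hij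
        have := h0 i
        simp only [f, Fin.mk_lt_mk]
        omega
      have hid : f = id := (hf.range_inj strictMono_id).mp <| by
        rw [(Finite.injective_iff_surjective.mp hf.injective).range_eq, Set.range_id]
      have := congrArg Fin.val (congrFun hid i)
      have := h0 i
      simp only [f, id] at *
      omega
    refine Matrix.det_eq_zero_of_row_eq_zero i fun j => ?_
    rw [toeplitzMatrix, Matrix.of_apply, completeHom_zero, if_neg (by omega)]

/-- Sequences of positions, each preceding the next in one step, that start with `0, 1, 2, …`
and reach `l` after `n` steps, where they stay. -/
def chains (n : ℕ) (l : Fin N → ℤ) : Set (ℕ → Fin N → ℤ) :=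
  {X | X 0 = (fun i : Fin N => (i : ℤ)) ∧ (∀ t < n, Interlaces (X t) (X (t + 1))) ∧
    ∀ t, n ≤ t → X t = l}

theorem exists_sigma_chains_bijective (n : ℕ) (l : Fin N → ℤ) :
    ∃ f : (Σ q : predecessors l, chains n (q : Fin N → ℤ)) → chains (n + 1) l,
      Function.Bijective f := by
  refine ⟨fun x => ⟨fun t => if t ≤ n then x.2.1 t else l, ?_, ?_, ?_⟩, ?_, ?_⟩
  · simpa using x.2.2.1
  · intro t ht
    rcases Nat.lt_succ_iff_lt_or_eq.mp ht with ht | rfl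
    · simpa [ht.le, Nat.succ_le_of_lt ht] using x.2.2.2.1 t ht
    · have hx : x.2.1 t = x.1.1 := x.2.2.2.2 t le_rfl
      simpa [hx] using mem_predecessors.mp x.1.2
  · intro t ht
    simp [show ¬ t ≤ n by omega]
  · rintro ⟨⟨q, hq⟩, X, hX⟩ ⟨⟨q', hq'⟩, X', hX'⟩ h
    have heq (t : ℕ) : (if t ≤ n then X t else l) = if t ≤ n then X' t else l :=
      congrFun (Subtype.ext_iff.mp h) t
    obtain rfl : q = q' :=
      (hX.2.2 n le_rfl).symm.trans ((by simpa using heq n : X n = X' n).trans (hX'.2.2 n le_rfl))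
    obtain rfl : X = X' := by
      funext t
      by_cases ht : t ≤ n
      · simpa [ht] using heq t
      · rw [hX.2.2 t (by omega), hX'.2.2 t (by omega)]
    rfl
  · rintro ⟨X, h₁, h₂, h₃⟩
    refine ⟨⟨⟨X n, mem_predecessors.mpr (h₃ (n + 1) le_rfl ▸ h₂ n (by omega))⟩,
      fun t => X (min t n), by simpa using h₁, fun t ht => ?_, fun t ht => by simp [min_eq_right ht]⟩,
      Subtype.ext (funext fun t => ?_)⟩
    · simpa [ht.le, Nat.succ_le_of_lt ht] using h₂ t (by omega)
    · by_cases ht : t ≤ n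
      · simp [ht]
      · simp [ht, h₃ t (by omega)]

theorem finite_chains_and_card (n : ℕ) {l : Fin N → ℤ} (hl : StrictMono l) (h0 : ∀ i, 0 ≤ l i) :
    Finite (chains n l) ∧ (Nat.card (chains n l) : ℚ) = (toeplitzMatrix n l).det := by
  induction n generalizing l with
  | zero =>
    rw [det_toeplitzMatrix_zero hl h0]
    split_ifs with h
    · have : chains 0 l = {fun _ => l} := by
        ext X
        simp only [chains, Set.mem_ofPred_eq, Set.mem_singleton_iff, funext_iff (f := X)]
        refine ⟨fun hX t => hX.2.2 t (by omega), fun hX => ⟨?_, by omega, fun t _ => hX t⟩⟩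
        rw [hX, h]
      rw [this]
      exact ⟨inferInstance, by simp⟩
    · have : chains 0 l = ∅ := by
        ext X
        simp only [chains, Set.mem_ofPred_eq, Set.mem_empty_iff_false, iff_false]
        rintro ⟨h₁, -, h₃⟩
        exact h ((h₃ 0 le_rfl).symm.trans h₁)
      rw [this]
      exact ⟨inferInstance, by simp⟩
  | succ n ih =>
    have ih' (q : predecessors l) := ih (mem_predecessors.mp q.2).strictMono
      (mem_predecessors.mp q.2).nonneg
    have (q : predecessors l) : Finite (chains n (q : Fin N → ℤ)) := (ih' q).1
    obtain ⟨f, hf⟩ := exists_sigma_chains_bijective n l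
    refine ⟨Finite.of_surjective f hf.2, ?_⟩
    rw [← Nat.card_congr (Equiv.ofBijective f hf), Nat.card_sigma, det_toeplitzMatrix_succ n hl h0,
      Nat.cast_sum, ← Finset.sum_coe_sort (predecessors l)]
    exact Finset.sum_congr rfl fun q _ => (ih' q).2

end Interlacing

section ChainLemmas

variable {N n : ℕ} {l : Fin N → ℤ} {X : ℕ → Fin N → ℤ}

theorem monotone_of_mem_chains (hX : X ∈ chains n l) (i : Fin N) : Monotone fun t => X t i := by
  refine monotone_nat_of_le_succ fun t => ?_
  by_cases ht : t < n
  · exact (hX.2.1 t ht).1 i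
  · rw [hX.2.2 t (by omega), hX.2.2 (t + 1) (by omega)]

theorem le_apply_of_mem_chains (hX : X ∈ chains n l) (t : ℕ) (i : Fin N) : (i : ℤ) ≤ X t i := by
  have h := monotone_of_mem_chains hX i (Nat.zero_le t)
  simpa only [hX.1] using h

theorem apply_le_of_mem_chains (hX : X ∈ chains n l) (t : ℕ) (i : Fin N) : X t i ≤ l i := by
  have h := monotone_of_mem_chains hX i (Nat.le_add_left t n)
  simpa only [hX.2.2 (n + t) (by omega)] using h

theorem strictMono_of_mem_chains (hX : X ∈ chains n l) {t : ℕ} (ht : t ≤ n) :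
    StrictMono (X t) := by
  cases t with
  | zero =>
    rw [hX.1]
    exact fun i j hij => by simpa using hij
  | succ t => exact (hX.2.1 t ht).strictMono_right

end ChainLemmas

section PlanePartition

variable {A B C : ℕ}

/-- The values of a plane partition in rotated coordinates, extended by `0` and `C`. -/
def paddedValue (P : Fin A × Fin B → Fin (C + 1)) (i : Fin A) (u : ℕ) : ℕ :=
  if u < A then 0 else if h : u - A < B then P (i.rev, Fin.rev ⟨u - A, h⟩) else C

theorem paddedValue_of_lt (P : Fin A × Fin B → Fin (C + 1)) (i : Fin A) {u : ℕ} (hu : u < A) :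
    paddedValue P i u = 0 := if_pos hu

theorem paddedValue_of_ge (P : Fin A × Fin B → Fin (C + 1)) (i : Fin A) {u : ℕ}
    (hu : A + B ≤ u) : paddedValue P i u = C := by
  rw [paddedValue, if_neg (by omega), dif_neg (by omega)]

theorem paddedValue_add (P : Fin A × Fin B → Fin (C + 1)) (i : Fin A) (s : Fin B) :
    paddedValue P i (A + s) = P (i.rev, s.rev) := by
  rw [paddedValue, if_neg (by omega), dif_pos (by omega)]
  simp

theorem paddedValue_le (P : Fin A × Fin B → Fin (C + 1)) (i : Fin A) (u : ℕ) :
    paddedValue P i u ≤ C := by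
  unfold paddedValue
  split_ifs
  · omega
  · exact Fin.is_le _
  · exact le_rfl

theorem paddedValue_mono {P : Fin A × Fin B → Fin (C + 1)} (hP : Antitone P) {i i' : Fin A}
    {u u' : ℕ} (hi : i ≤ i') (hu : u ≤ u') : paddedValue P i u ≤ paddedValue P i' u' := by
  rcases lt_or_ge u A with h | h
  · rw [paddedValue_of_lt P i h]
    exact Nat.zero_le _
  rcases lt_or_ge u' (A + B) with h' | h'
  · obtain ⟨s, rfl⟩ := Nat.exists_eq_add_of_le h
    obtain ⟨s', rfl⟩ := Nat.exists_eq_add_of_le (h.trans hu)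
    have e := paddedValue_add P i ⟨s, by omega⟩
    have e' := paddedValue_add P i' ⟨s', by omega⟩
    simp only at e e'
    rw [e, e']
    refine hP ⟨Fin.rev_le_rev.mpr hi, Fin.rev_le_rev.mpr ?_⟩
    simpa using hu
  · rw [paddedValue_of_ge P i' h']
    exact paddedValue_le P i u

/-- The positions read off the successive diagonals of a plane partition. -/
def diagonalChain (P : Fin A × Fin B → Fin (C + 1)) (t : ℕ) (i : Fin A) : ℤ :=
  i + paddedValue P i (t + i)

theorem diagonalChain_mem {P : Fin A × Fin B → Fin (C + 1)} (hP : Antitone P) :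
    diagonalChain P ∈ chains (A + B) fun i => (i : ℤ) + C := by
  refine ⟨funext fun i => ?_, fun t _ => ⟨fun i => ?_, fun i _ => ?_, fun i j hij => ?_⟩,
    fun t ht => funext fun i => ?_⟩
  · rw [diagonalChain, paddedValue_of_lt P i (by omega)]
    simp
  · have := paddedValue_mono hP (le_refl i) (show t + i ≤ t + 1 + i by omega)
    simp only [diagonalChain]
    omega
  · simp only [diagonalChain]
    omega
  · have := paddedValue_mono hP (show i ≤ j from Fin.le_def.mpr (by omega))
      (show t + 1 + i ≤ t + j by omega)
    simp only [diagonalChain]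
    omega
  · rw [diagonalChain, paddedValue_of_ge P i (by omega)]

theorem diagonalChain_apply (P : Fin A × Fin B → Fin (C + 1)) (i : Fin A) (s : Fin B) :
    diagonalChain P (A + s - i) i = i + (P (i.rev, s.rev) : ℕ) := by
  rw [diagonalChain, show A + s - i + i = A + (s : ℕ) by omega, paddedValue_add]

section Surjective

variable {X : ℕ → Fin A → ℤ}

theorem add_le_of_mem_chains (hX : X ∈ chains (A + B) fun i => (i : ℤ) + C) (t d : ℕ) :
    ∀ i j : Fin A, (i : ℕ) + d = j → X (t + d) i + d ≤ X t j := by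
  induction d with
  | zero =>
    intro i j hij
    obtain rfl : i = j := Fin.ext hij
    simp
  | succ d ih =>
    intro i j hij
    have h₁ := ih ⟨i + 1, by omega⟩ j (by simp only; omega)
    have h₂ : X (t + d + 1) i < X (t + d) ⟨i + 1, by omega⟩ := by
      by_cases ht : t + d < A + B
      · exact (hX.2.1 _ ht).2.2 _ _ rfl
      · rw [hX.2.2 _ (by omega), hX.2.2 _ (by omega)]
        push_cast
        omega
    rw [← add_assoc]
    push_cast
    omega

theorem apply_eq_of_add_lt (hX : X ∈ chains (A + B) fun i => (i : ℤ) + C) {t : ℕ} {i : Fin A}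
    (h : t + i < A) : X t i = i := by
  have h₁ := le_apply_of_mem_chains hX t i
  have h₂ := add_le_of_mem_chains hX 0 t i ⟨i + t, by omega⟩ rfl
  rw [hX.1, zero_add] at h₂
  push_cast at h₂
  omega

theorem apply_eq_of_le_add (hX : X ∈ chains (A + B) fun i => (i : ℤ) + C) {t : ℕ} {i : Fin A}
    (h : A + B ≤ t + i) : X t i = i + C := by
  by_cases ht : A + B ≤ t
  · rw [hX.2.2 t ht]
  have h₁ := apply_le_of_mem_chains hX t i
  have h₂ := add_le_of_mem_chains hX t (A + B - t) ⟨i - (A + B - t), by omega⟩ i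
    (by simp only; omega)
  rw [hX.2.2 _ (by omega)] at h₂
  simp only at h₁ h₂
  omega

theorem exists_diagonalChain_eq (hX : X ∈ chains (A + B) fun i => (i : ℤ) + C) :
    ∃ P : Fin A × Fin B → Fin (C + 1), Antitone P ∧ diagonalChain P = X := by
  let P : Fin A × Fin B → Fin (C + 1) := fun x =>
    ⟨(X (A + x.2.rev - x.1.rev) x.1.rev - x.1.rev).toNat, by
      have := apply_le_of_mem_chains hX (A + x.2.rev - x.1.rev) x.1.rev
      omega⟩
  have hP : ∀ x, ((P x : ℕ) : ℤ) = X (A + x.2.rev - x.1.rev) x.1.rev - x.1.rev := fun x => by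
    have := le_apply_of_mem_chains hX (A + x.2.rev - x.1.rev) x.1.rev
    simp only [P]
    omega
  refine ⟨P, fun x y hxy => ?_, funext fun t => funext fun i => ?_⟩
  · have h₁ : (y.1.rev : ℕ) ≤ x.1.rev := Fin.rev_le_rev.mpr hxy.1
    have h₂ : (y.2.rev : ℕ) ≤ x.2.rev := Fin.rev_le_rev.mpr hxy.2
    rw [Fin.le_def, ← Int.ofNat_le, hP, hP]
    have h₃ := add_le_of_mem_chains hX (A + x.2.rev - x.1.rev) (x.1.rev - y.1.rev : ℕ) y.1.rev
      x.1.rev (by omega)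
    have h₄ := monotone_of_mem_chains hX y.1.rev (show A + (y.2.rev : ℕ) - y.1.rev ≤
      A + x.2.rev - x.1.rev + (x.1.rev - y.1.rev : ℕ) by omega)
    simp only at h₄
    omega
  · rcases lt_or_ge (t + i) A with h | h
    · rw [apply_eq_of_add_lt hX h, diagonalChain, paddedValue_of_lt _ _ h]
      simp
    rcases lt_or_ge (t + i) (A + B) with h' | h'
    · have e := diagonalChain_apply P i ⟨t + i - A, by omega⟩
      rw [hP] at e
      simp only [Fin.rev_rev, show A + (t + i - A) - (i : ℕ) = t by omega] at e
      rw [e]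
      ring
    · rw [apply_eq_of_le_add hX h', diagonalChain, paddedValue_of_ge _ _ h']

end Surjective

/-- Plane partitions in a box correspond to chains of positions. -/
noncomputable def planePartitionEquiv (A B C : ℕ) :
    {P : Fin A × Fin B → Fin (C + 1) // Antitone P} ≃
      chains (A + B) fun i : Fin A => (i : ℤ) + C :=
  Equiv.ofBijective (fun P => ⟨diagonalChain P.1, diagonalChain_mem P.2⟩) <| by
    constructor
    · rintro ⟨P, hP⟩ ⟨P', hP'⟩ h
      refine Subtype.ext (funext fun x => Fin.ext ?_)
      have e := diagonalChain_apply P x.1.rev x.2.rev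
      have e' := diagonalChain_apply P' x.1.rev x.2.rev
      have heq : diagonalChain P = diagonalChain P' := Subtype.ext_iff.mp h
      rw [heq, e'] at e
      simp only [Fin.rev_rev, Prod.mk.eta] at e
      simp only
      omega
    · rintro ⟨X, hX⟩
      obtain ⟨P, hP, rfl⟩ := exists_diagonalChain_eq hX
      exact ⟨⟨P, hP⟩, rfl⟩

theorem selfComplementary_iff_diagonalChain (P : Fin A × Fin B → Fin (C + 1)) :
    (∀ x : Fin A × Fin B, (P x : ℕ) + (P (x.1.rev, x.2.rev) : ℕ) = C) ↔
      ∀ t ≤ A + B, ∀ i, diagonalChain P t i + diagonalChain P (A + B - t) i.rev = C + A - 1 := by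
  constructor
  · intro h t ht i
    have hrev : (i.rev : ℕ) = A - (i + 1) := Fin.val_rev i
    suffices paddedValue P i (t + i) + paddedValue P i.rev (A + B - t + i.rev) = C by
      simp only [diagonalChain]
      omega
    rcases lt_or_ge (t + i) A with h₁ | h₁
    · rw [paddedValue_of_lt _ _ h₁, paddedValue_of_ge _ _ (by omega), zero_add]
    rcases lt_or_ge (t + i) (A + B) with h₂ | h₂
    · have e := paddedValue_add P i ⟨t + i - A, by omega⟩
      have e' := paddedValue_add P i.rev (Fin.rev ⟨t + i - A, by omega⟩)
      simp only [Fin.val_rev, Fin.rev_rev] at e e'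
      rw [show t + (i : ℕ) = A + (t + i - A) by omega, e,
        show A + B - t + (i.rev : ℕ) = A + (B - (t + i - A + 1)) by omega, e']
      have := h (i.rev, Fin.rev ⟨t + i - A, by omega⟩)
      simpa only [Fin.rev_rev] using this
    · rw [paddedValue_of_ge _ _ h₂, paddedValue_of_lt _ _ (by omega), add_zero]
  · intro h x
    have hrev₁ : (x.1.rev : ℕ) = A - (x.1 + 1) := Fin.val_rev x.1
    have hrev₂ : (x.2.rev : ℕ) = B - (x.2 + 1) := Fin.val_rev x.2
    have e := h (A + x.2.rev - x.1.rev) (by omega) x.1.rev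
    rw [diagonalChain_apply, Fin.rev_rev,
      show A + B - (A + (x.2.rev : ℕ) - x.1.rev) = A + x.2 - x.1 by omega,
      diagonalChain_apply, Fin.rev_rev] at e
    simp only [Prod.mk.eta] at e
    omega

/-- Self-complementary plane partitions in a box correspond to symmetric chains of positions. -/
noncomputable def selfComplementaryEquiv (A B C : ℕ) :
    {P : Fin A × Fin B → Fin (C + 1) // Antitone P ∧
      ∀ x : Fin A × Fin B, (P x : ℕ) + (P (x.1.rev, x.2.rev) : ℕ) = C} ≃
    {X : chains (A + B) fun i : Fin A => (i : ℤ) + C //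
      ∀ t ≤ A + B, ∀ i, X.1 t i + X.1 (A + B - t) i.rev = C + A - 1} :=
  (Equiv.subtypeSubtypeEquivSubtypeInter _ _).symm.trans <|
    (planePartitionEquiv A B C).subtypeEquiv fun P => selfComplementary_iff_diagonalChain P.1

end PlanePartition

section SymmetricChains

theorem Interlaces.reflect {N : ℕ} {q l : Fin N → ℤ} (h : Interlaces q l) {K : ℤ}
    (hK : ∀ i, l i ≤ K) : Interlaces (fun i => K - l i.rev) fun i => K - q i.rev := by
  refine ⟨fun i => ?_, fun i _ => ?_, fun i j hij => ?_⟩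
  · have := h.1 i.rev
    simp only
    omega
  · have := hK i.rev
    simp only
    omega
  · have := h.2.2 j.rev i.rev (by rw [Fin.val_rev, Fin.val_rev]; omega)
    simp only
    omega

/-- The chain of length `2 * n` whose first half is `Z` and whose second half is its reflection. -/
def unfoldChain {N : ℕ} (n : ℕ) (K : ℤ) (Z : ℕ → Fin N → ℤ) (t : ℕ) (i : Fin N) : ℤ :=
  if t ≤ n then Z t i else K - Z (2 * n - t) i.rev

variable {N n : ℕ} {K : ℤ} {l : Fin N → ℤ} {Z : ℕ → Fin N → ℤ}

theorem unfoldChain_of_le {t : ℕ} (ht : t ≤ n) : unfoldChain n K Z t = Z t :=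
  funext fun _ => if_pos ht

theorem unfoldChain_of_ge (hZ : Z ∈ chains n l) (hl : ∀ i, l i + l i.rev = K) {t : ℕ}
    (ht : n ≤ t) : unfoldChain n K Z t = fun i => K - Z (2 * n - t) i.rev := by
  funext i
  rcases ht.eq_or_lt with rfl | ht
  · rw [unfoldChain_of_le le_rfl, show 2 * n - n = n by omega, hZ.2.2 n le_rfl]
    have := hl i
    omega
  · exact if_neg (by omega)

theorem unfoldChain_mem {C : ℕ} (hZ : Z ∈ chains n l) (hl : ∀ i, l i + l i.rev = K)
    (hlK : ∀ i, l i ≤ K) (hK : K = C + N - 1) :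
    unfoldChain n K Z ∈ chains (2 * n) fun i => (i : ℤ) + C := by
  refine ⟨by rw [unfoldChain_of_le (Nat.zero_le n), hZ.1], fun t ht => ?_, fun t ht => ?_⟩
  · by_cases h : t + 1 ≤ n
    · rw [unfoldChain_of_le h, unfoldChain_of_le (by omega)]
      exact hZ.2.1 t h
    · rw [unfoldChain_of_ge hZ hl (by omega), unfoldChain_of_ge hZ hl (by omega)]
      have := hZ.2.1 (2 * n - (t + 1)) (by omega)
      rw [show 2 * n - (t + 1) + 1 = 2 * n - t by omega] at this
      exact this.reflect fun i => (apply_le_of_mem_chains hZ _ i).trans (hlK i)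
  · rw [unfoldChain_of_ge hZ hl (by omega), show 2 * n - t = 0 by omega, hZ.1]
    funext i
    simp only [Fin.val_rev]
    omega

theorem unfoldChain_add_rev (hZ : Z ∈ chains n l) (hl : ∀ i, l i + l i.rev = K) {t : ℕ}
    (ht : t ≤ 2 * n) (i : Fin N) :
    unfoldChain n K Z t i + unfoldChain n K Z (2 * n - t) i.rev = K := by
  rcases le_total t n with h | h
  · rw [unfoldChain_of_le h, unfoldChain_of_ge hZ hl (by omega),
      show 2 * n - (2 * n - t) = t by omega]
    simp only [Fin.rev_rev, add_sub_cancel]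
  · rw [unfoldChain_of_ge hZ hl h, unfoldChain_of_le (by omega)]
    simp only [sub_add_cancel]

theorem truncate_mem_chains {L : Fin N → ℤ} {T : ℕ} {X : ℕ → Fin N → ℤ} (hX : X ∈ chains T L)
    (hn : n ≤ T) : (fun t => X (min t n)) ∈ chains n (X n) := by
  refine ⟨by simpa using hX.1, fun t ht => ?_, fun t ht => by simp only [min_eq_right ht]⟩
  have := hX.2.1 t (by omega)
  simpa only [min_eq_left ht.le, min_eq_left (Nat.succ_le_of_lt ht)] using this

theorem unfoldChain_truncate {L : Fin N → ℤ} {X : ℕ → Fin N → ℤ} (hX : X ∈ chains (2 * n) L)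
    (hsymm : ∀ t ≤ 2 * n, ∀ i, X t i + X (2 * n - t) i.rev = K) :
    unfoldChain n K (fun t => X (min t n)) = X := by
  funext t i
  by_cases ht : t ≤ n
  · rw [unfoldChain_of_le ht, min_eq_left ht]
  · rw [unfoldChain, if_neg ht, min_eq_left (by omega)]
    by_cases h : t ≤ 2 * n
    · have := hsymm t h i
      omega
    · have := hsymm (2 * n) le_rfl i
      rw [Nat.sub_self] at this
      rw [hX.2.2 t (by omega), ← hX.2.2 (2 * n) le_rfl, show 2 * n - t = 0 by omega]
      omega

end SymmetricChains

section SymmetricPositions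

variable {a m : ℕ}

/-- The `2 * a` positions below `2 * m` that are symmetric and whose lower half is `k`. -/
def symmPositions (k : Fin a ↪o Fin m) (i : Fin (2 * a)) : ℤ :=
  if h : (i : ℕ) < a then k ⟨i, h⟩ else 2 * m - 1 - k ⟨2 * a - 1 - i, by omega⟩

theorem symmPositions_of_lt (k : Fin a ↪o Fin m) {i : Fin (2 * a)} (h : (i : ℕ) < a) :
    symmPositions k i = k ⟨i, h⟩ := dif_pos h

theorem symmPositions_add_rev (k : Fin a ↪o Fin m) (i : Fin (2 * a)) :
    symmPositions k i + symmPositions k i.rev = 2 * m - 1 := by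
  have hrev := Fin.val_rev i
  by_cases h : (i : ℕ) < a
  · rw [symmPositions_of_lt k h, symmPositions, dif_neg (by omega)]
    simp only [show 2 * a - 1 - (i.rev : ℕ) = i by omega]
    omega
  · rw [symmPositions_of_lt k (i := i.rev) (by omega), symmPositions, dif_neg h]
    simp only [show (i.rev : ℕ) = 2 * a - 1 - i by omega]
    omega

theorem symmPositions_nonneg (k : Fin a ↪o Fin m) (i : Fin (2 * a)) : 0 ≤ symmPositions k i := by
  unfold symmPositions
  split_ifs <;> omega

theorem symmPositions_le (k : Fin a ↪o Fin m) (i : Fin (2 * a)) :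
    symmPositions k i ≤ 2 * m - 1 := by
  have h₁ := symmPositions_add_rev k i
  have h₂ := symmPositions_nonneg k i.rev
  omega

theorem symmPositions_strictMono (k : Fin a ↪o Fin m) : StrictMono (symmPositions k) := by
  intro i j hij
  have hij' : (i : ℕ) < j := hij
  unfold symmPositions
  split_ifs with h₁ h₂ h₂
  · have : k ⟨i, h₁⟩ < k ⟨j, h₂⟩ := k.lt_iff_lt.mpr hij
    omega
  · omega
  · omega
  · have : k ⟨2 * a - 1 - j, by omega⟩ < k ⟨2 * a - 1 - i, by omega⟩ :=
      k.lt_iff_lt.mpr (Fin.mk_lt_mk.mpr (by omega))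
    omega

theorem symmPositions_injective :
    Function.Injective (symmPositions : (Fin a ↪o Fin m) → Fin (2 * a) → ℤ) := by
  intro k k' h
  refine DFunLike.ext _ _ fun r => Fin.ext ?_
  have e := congrFun h ⟨r, by omega⟩
  rw [symmPositions_of_lt k r.2, symmPositions_of_lt k' r.2] at e
  exact_mod_cast e

theorem exists_symmPositions_eq {l : Fin (2 * a) → ℤ} (hl : StrictMono l) (h0 : ∀ i, 0 ≤ l i)
    (hsymm : ∀ i, l i + l i.rev = 2 * m - 1) : ∃ k : Fin a ↪o Fin m, symmPositions k = l := by
  have hlt (r : Fin a) : l ⟨r, by omega⟩ < m := by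
    have h₁ := hsymm ⟨r, by omega⟩
    have h₂ : l ⟨r, by omega⟩ < l (Fin.rev ⟨r, by omega⟩) :=
      hl (Fin.lt_def.mpr (by rw [Fin.val_rev]; simp only; omega))
    omega
  have hk (r : Fin a) : (l ⟨r, by omega⟩).toNat < m := by
    have h₁ := hlt r
    have h₂ := h0 ⟨r, by omega⟩
    omega
  have hk' : StrictMono fun r : Fin a => (⟨_, hk r⟩ : Fin m) := fun r s hrs => by
    have h₁ : l ⟨r, by omega⟩ < l ⟨s, by omega⟩ := hl hrs
    have h₂ := h0 ⟨r, by omega⟩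
    rw [Fin.mk_lt_mk]
    omega
  obtain ⟨k, hk⟩ : ∃ k : Fin a ↪o Fin m, ∀ r, (k r : ℤ) = l ⟨r, by omega⟩ :=
    ⟨OrderEmbedding.ofStrictMono _ hk', fun r => Int.toNat_of_nonneg (h0 _)⟩
  refine ⟨k, funext fun i => ?_⟩
  unfold symmPositions
  split_ifs with h
  · exact hk _
  · have h₁ := hsymm i
    have h₂ : i.rev = ⟨2 * a - 1 - i, by omega⟩ := Fin.ext (by rw [Fin.val_rev]; simp only; omega)
    rw [h₂] at h₁
    rw [hk]
    simp only
    omega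

/-- A symmetric chain is determined by its first half, which ends in symmetric positions. -/
noncomputable def symmetricChainsEquiv (n a c : ℕ) :
    (Σ k : Fin a ↪o Fin (a + c), chains n (symmPositions k)) ≃
    {X : chains (2 * n) fun i : Fin (2 * a) => (i : ℤ) + (2 * c : ℕ) //
      ∀ t ≤ 2 * n, ∀ i, X.1 t i + X.1 (2 * n - t) i.rev = (2 * c : ℕ) + (2 * a : ℕ) - 1} :=
  Equiv.ofBijective (fun Z => ⟨⟨unfoldChain n ((2 * c : ℕ) + (2 * a : ℕ) - 1) Z.2.1,
      unfoldChain_mem Z.2.2 (fun i => by rw [symmPositions_add_rev]; push_cast; ring)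
        (fun i => (symmPositions_le Z.1 i).trans_eq (by push_cast; ring)) rfl⟩,
      fun t ht i => unfoldChain_add_rev Z.2.2
        (fun i => by rw [symmPositions_add_rev]; push_cast; ring) ht i⟩) <| by
    constructor
    · rintro ⟨k, Z, hZ⟩ ⟨k', Z', hZ'⟩ h
      have h : unfoldChain n _ Z = unfoldChain n _ Z' :=
        congrArg (fun X => X.1.1) h
      have hle (t : ℕ) (ht : t ≤ n) : Z t = Z' t := by
        have := congrFun h t
        rwa [unfoldChain_of_le ht, unfoldChain_of_le ht] at this
      obtain rfl : k = k' := symmPositions_injective (by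
        rw [← hZ.2.2 n le_rfl, ← hZ'.2.2 n le_rfl, hle n le_rfl])
      obtain rfl : Z = Z' := funext fun t => by
        by_cases ht : t ≤ n
        · exact hle t ht
        · rw [hZ.2.2 t (by omega), hZ'.2.2 t (by omega)]
      rfl
    · rintro ⟨⟨X, hX⟩, hsymm⟩
      have hmid := hsymm n (by omega)
      rw [show 2 * n - n = n by omega] at hmid
      obtain ⟨k, hk⟩ := exists_symmPositions_eq (m := a + c)
        (strictMono_of_mem_chains hX (t := n) (by omega))
        (fun i => (Int.natCast_nonneg _).trans (le_apply_of_mem_chains hX n i))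
        fun i => (hmid i).trans (by push_cast; ring)
      refine ⟨⟨k, fun t => X (min t n), ?_⟩, Subtype.ext (Subtype.ext ?_)⟩
      · rw [hk]
        exact truncate_mem_chains hX (by omega)
      · exact unfoldChain_truncate hX hsymm

end SymmetricPositions

section Determinants

/-- The first block of `a` indices in order, followed by the second block. -/
def blockEquiv (a : ℕ) : Fin a ⊕ Fin a ≃ Fin (2 * a) :=
  finSumFinEquiv.trans (finCongr (two_mul a).symm)

theorem exists_det_toeplitzMatrix_symmPositions (n a m : ℕ) : ∃ s : ℚ, |s| = 1 ∧
    ∀ k : Fin a ↪o Fin m, (toeplitzMatrix n (symmPositions k)).det =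
      s * (stackRows (fun r (α : Fin a ⊕ Fin a) => completeHom n (k r - blockPos α))
        (fun r α => completeHom n (2 * m - 1 - k r - blockPos α))).det := by
  let f := blockEquiv a
  let e := (Equiv.sumCongr (Equiv.refl (Fin a)) Fin.revPerm).trans f
  let σ := f.symm.trans e
  refine ⟨(Perm.sign σ : ℤ), by simp [← Int.cast_abs], fun k => ?_⟩
  have : stackRows (fun r (α : Fin a ⊕ Fin a) => completeHom n (k r - blockPos α))
      (fun r α => completeHom n (2 * m - 1 - k r - blockPos α)) =
      ((toeplitzMatrix n (symmPositions k)).submatrix σ id).submatrix f f := by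
    ext x α
    have hα : ((f α : ℕ) : ℤ) = blockPos α := by
      rcases α with α | α <;> simp [f, blockEquiv, add_comm]
    have hσ : σ (f x) = e x := congrArg e (f.symm_apply_apply x)
    rcases x with r | r
    · have : symmPositions k (σ (f (.inl r))) = k r := by
        rw [hσ, symmPositions_of_lt k (by simp [e, f, blockEquiv])]
        simp [e, f, blockEquiv]
      simp [stackRows, toeplitzMatrix, this, hα]
    · have : symmPositions k (σ (f (.inr r))) = 2 * m - 1 - k r := by
        have hr : (σ (f (.inr r))).rev = f (.inl r) := by
          rw [hσ]
          ext
          simp only [e, f, blockEquiv, Equiv.trans_apply, Equiv.sumCongr_apply, Sum.map_inr,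
            Fin.revPerm_apply, finSumFinEquiv_apply_right, finSumFinEquiv_apply_left,
            finCongr_apply, Fin.val_rev, Fin.val_cast, Fin.val_natAdd, Fin.val_castAdd]
          omega
        have h := symmPositions_add_rev k (σ (f (.inr r)))
        rw [hr, symmPositions_of_lt k (i := f (.inl r)) (by simp [f, blockEquiv])] at h
        simp only [f, blockEquiv, Equiv.trans_apply, finSumFinEquiv_apply_left,
          finCongr_apply, Fin.val_cast, Fin.val_castAdd, Fin.eta] at h ⊢
        omega
      simp [stackRows, toeplitzMatrix, this, hα]
  rw [this, Matrix.det_submatrix_equiv_self, Matrix.det_permute, ← mul_assoc, ← Int.cast_mul,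
    Int.units_coe_mul_self, Int.cast_one, one_mul]

theorem sq_det_hankel (n a c : ℕ) :
    (Matrix.of fun i j : Fin a => completeHom n ((a + c : ℕ) - 1 - (i + j))).det ^ 2 =
      (toeplitzMatrix n fun i : Fin a => (i : ℤ) + c).det ^ 2 := by
  have : (Matrix.of fun i j : Fin a => completeHom n ((a + c : ℕ) - 1 - (i + j))) =
      (toeplitzMatrix n fun i : Fin a => (i : ℤ) + c).submatrix Fin.revPerm id := by
    ext i j
    simp only [toeplitzMatrix, Matrix.of_apply, Matrix.submatrix_apply, id, Fin.revPerm_apply,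
      Fin.val_rev]
    congr 1
    omega
  rw [this, Matrix.det_permute, mul_pow, ← Int.cast_pow, ← Units.val_pow_eq_pow_val,
    Int.units_sq, Units.val_one, Int.cast_one, one_mul]

end Determinants

section Counting

theorem card_planePartition (a b c : ℕ) :
    (Nat.card {P : Fin a × Fin b → Fin (c + 1) // Antitone P} : ℚ) =
      (toeplitzMatrix (a + b) fun i : Fin a => (i : ℤ) + c).det := by
  rw [Nat.card_congr (planePartitionEquiv a b c)]
  exact (finite_chains_and_card _ (fun i j hij => by simpa using hij) fun i => by positivity).2

theorem card_selfComplementary (a b c : ℕ) :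
    (Nat.card {P : Fin (2 * a) × Fin (2 * b) → Fin (2 * c + 1) // Antitone P ∧
      ∀ p : Fin (2 * a) × Fin (2 * b), (P p : ℕ) + (P (p.1.rev, p.2.rev) : ℕ) = 2 * c} : ℚ) =
      ∑ k : Fin a ↪o Fin (a + c), (toeplitzMatrix (a + b) (symmPositions k)).det := by
  have hk (k : Fin a ↪o Fin (a + c)) :=
    finite_chains_and_card (a + b) (symmPositions_strictMono k) (symmPositions_nonneg k)
  have (k : Fin a ↪o Fin (a + c)) : Finite (chains (a + b) (symmPositions k)) := (hk k).1
  have e := selfComplementaryEquiv (2 * a) (2 * b) (2 * c)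
  rw [← mul_add] at e
  rw [Nat.card_congr (e.trans (symmetricChainsEquiv (a + b) a c).symm), Nat.card_sigma,
    Nat.cast_sum]
  exact Finset.sum_congr rfl fun k _ => (hk k).2

end Counting

end StanleySelfComplementary

open StanleySelfComplementary

/-- Stanley's theorem: the number of self-complementary plane partitions inside a
`(2a) × (2b) × (2c)` box equals the number of ordered pairs of plane partitions each
fitting inside an `a × b × c` box. Plane partitions in an `a × b × c` box are encoded
as antitone maps `[a] × [b] → {0,…,c}`; `P` is self-complementary when
`P(i,j) + P(2a+1-i, 2b+1-j) = 2c` for all `(i,j)`. -/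
theorem stmt_18 (a b c : ℕ) :
    Nat.card {P : Fin (2 * a) × Fin (2 * b) → Fin (2 * c + 1) //
        Antitone P ∧
        ∀ p : Fin (2 * a) × Fin (2 * b),
          (P p : ℕ) + (P (p.1.rev, p.2.rev) : ℕ) = 2 * c} =
    (Nat.card {P : Fin a × Fin b → Fin (c + 1) // Antitone P}) ^ 2 := by
  have hpos : (Nat.card {P : Fin a × Fin b → Fin (c + 1) // Antitone P} : ℚ) ≠ 0 :=
    have : Nonempty {P : Fin a × Fin b → Fin (c + 1) // Antitone P} := ⟨fun _ => 0, antitone_const⟩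
    Nat.cast_ne_zero.mpr Nat.card_pos.ne'
  have hdet := sq_det_hankel (a + b) a c
  rw [← card_planePartition] at hdet
  obtain ⟨s, hs, h⟩ := exists_det_toeplitzMatrix_symmPositions (a + b) a (a + c)
  have hmain := abs_sum_det_symmetric (fun _ => completeHom_of_neg (a + b)) a (a + c)
    (pow_ne_zero_iff two_ne_zero |>.mp (hdet ▸ pow_ne_zero 2 hpos))
  rw [hdet] at hmain
  have hcard := card_selfComplementary a b c
  simp only [h] at hcard
  rw [← Finset.mul_sum] at hcard
  have habs := congrArg abs hcard
  rw [abs_mul, hs, one_mul, hmain, Nat.abs_cast] at habs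
  exact_mod_cast habs
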